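/- Let σ > 0, r, q ∈ ℝ, T > 0, 0 < B ≤ K, and λ = (2/σ²)(r − q − σ²/2). The down-and-out call price u(s,t) = C(s,K,t) − (B/s)^λ · C(B²/s, K, t), where C(s,K,t) = s·e^{-q t}·N(d₁(s,K,t)) − K·e^{-r t}·N(d₂(s,K,t)), satisfies the forward Black–Scholes PDE ∂u/∂t − (1/2)σ²s² ∂²u/∂s² − (r−q)s ∂u/∂s + r u = 0 for all (s,t) ∈ (B,∞) × (0,T], and satisfies the knock-out boundary condition u(B,t) = 0 for all t ∈ (0,T]. -/

import Mathlib

open Real Set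

/-- The standard normal cumulative distribution function. -/
noncomputable def stdNormalCDF (x : ℝ) : ℝ :=
  ∫ y in Set.Iic x, (Real.sqrt (2 * Real.pi))⁻¹ * Real.exp (-(y ^ 2) / 2)

/-- d₁(s,K,t) in the Black–Scholes formula. -/
noncomputable def d1 (σ r q s K t : ℝ) : ℝ :=
  (Real.log (s / K) + (r - q + σ ^ 2 / 2) * t) / (σ * Real.sqrt t)

/-- d₂(s,K,t) in the Black–Scholes formula. -/
noncomputable def d2 (σ r q s K t : ℝ) : ℝ :=
  d1 σ r q s K t - σ * Real.sqrt t

/-- The Black–Scholes European call price. -/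
noncomputable def callPrice (σ r q K s t : ℝ) : ℝ :=
  s * Real.exp (-q * t) * stdNormalCDF (d1 σ r q s K t)
    - K * Real.exp (-r * t) * stdNormalCDF (d2 σ r q s K t)

/-- The Black–Scholes European put price. -/
noncomputable def putPrice (σ r q K s t : ℝ) : ℝ :=
  K * Real.exp (-r * t) * stdNormalCDF (-(d2 σ r q s K t))
    - s * Real.exp (-q * t) * stdNormalCDF (-(d1 σ r q s K t))

/-- The standard normal probability density function. -/
noncomputable def stdNormalPDF (x : ℝ) : ℝ :=
  (Real.sqrt (2 * Real.pi))⁻¹ * Real.exp (-(x ^ 2) / 2)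

/-- The reflection exponent λ = (2/σ²)(r − q − σ²/2). -/
noncomputable def reflectionExponent (σ r q : ℝ) : ℝ :=
  (2 / σ ^ 2) * (r - q - σ ^ 2 / 2)

/-- The down-and-out call price u(s,t) = C(s,K,t) − (B/s)^λ·C(B²/s,K,t). -/
noncomputable def downOutCall (σ r q K B s t : ℝ) : ℝ :=
  callPrice σ r q K s t
    - (B / s) ^ reflectionExponent σ r q * callPrice σ r q K (B ^ 2 / s) t

lemma stdNormalPDF_integrable : MeasureTheory.Integrable
    (fun y : ℝ => (Real.sqrt (2 * Real.pi))⁻¹ * Real.exp (-(y ^ 2) / 2)) := by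
  have h := (integrable_exp_neg_mul_sq (b := 1 / 2) (by norm_num)).const_mul
    ((Real.sqrt (2 * Real.pi))⁻¹)
  refine h.congr (Filter.Eventually.of_forall fun y => ?_)
  simp only
  congr 2
  ring

lemma stdNormalCDF_hasDerivAt (x : ℝ) :
    HasDerivAt stdNormalCDF (stdNormalPDF x) x := by
  have hcont : Continuous
      (fun y : ℝ => (Real.sqrt (2 * Real.pi))⁻¹ * Real.exp (-(y ^ 2) / 2)) := by fun_prop
  have h1 : ∀ z, stdNormalCDF z = stdNormalCDF 0 +
      ∫ y in (0 : ℝ)..z, (Real.sqrt (2 * Real.pi))⁻¹ * Real.exp (-(y ^ 2) / 2) := by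
    intro z
    have := intervalIntegral.integral_Iic_sub_Iic (a := 0) (b := z)
      (stdNormalPDF_integrable.integrableOn) (stdNormalPDF_integrable.integrableOn)
    unfold stdNormalCDF
    linarith
  have h2 : HasDerivAt (fun z => stdNormalCDF 0 +
      ∫ y in (0 : ℝ)..z, (Real.sqrt (2 * Real.pi))⁻¹ * Real.exp (-(y ^ 2) / 2))
      (stdNormalPDF x) x :=
    (hcont.integral_hasStrictDerivAt 0 x).hasDerivAt.const_add _
  exact h2.congr_of_eventuallyEq (Filter.Eventually.of_forall h1)

lemma pdf_identity {σ r q K s t : ℝ} (hσ : 0 < σ) (hK : 0 < K) (hs : 0 < s) (ht : 0 < t) :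
    K * Real.exp (-r * t) * stdNormalPDF (d2 σ r q s K t) =
      s * Real.exp (-q * t) * stdNormalPDF (d1 σ r q s K t) := by
  have hst : 0 < Real.sqrt t := Real.sqrt_pos.mpr ht
  have hsq : Real.sqrt t ^ 2 = t := Real.sq_sqrt ht.le
  have hd : d1 σ r q s K t * (σ * Real.sqrt t) =
      Real.log s - Real.log K + (r - q + σ ^ 2 / 2) * t := by
    unfold d1
    rw [Real.log_div hs.ne' hK.ne']
    field_simp
  have h2 : -(d2 σ r q s K t ^ 2) / 2 =
      -(d1 σ r q s K t ^ 2) / 2 + Real.log s - Real.log K + (r - q) * t := by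
    unfold d2
    linear_combination hd - σ ^ 2 / 2 * hsq
  unfold stdNormalPDF
  rw [h2]
  have h3 : Real.exp (-(d1 σ r q s K t ^ 2) / 2 + Real.log s - Real.log K + (r - q) * t) =
      Real.exp (-(d1 σ r q s K t ^ 2) / 2) * s / K * Real.exp ((r - q) * t) := by
    rw [Real.exp_add, Real.exp_sub, Real.exp_add, Real.exp_log hs, Real.exp_log hK]
  have h4 : Real.exp (-q * t) = Real.exp (-r * t) * Real.exp ((r - q) * t) := by
    rw [← Real.exp_add]; congr 1; ring
  rw [h3, h4]
  field_simp

lemma d1_hasDerivAt_s {σ r q K s t : ℝ} (hσ : 0 < σ) (hK : 0 < K) (hs : 0 < s) (ht : 0 < t) :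
    HasDerivAt (fun x => d1 σ r q x K t) (1 / (s * σ * Real.sqrt t)) s := by
  have hst : 0 < Real.sqrt t := Real.sqrt_pos.mpr ht
  have h := ((((hasDerivAt_id s).div_const K).log (div_pos hs hK).ne').add_const
    ((r - q + σ ^ 2 / 2) * t)).div_const (σ * Real.sqrt t)
  refine h.congr_deriv ?_
  simp only [id]
  field_simp

lemma call_hasDerivAt_s {σ r q K s t : ℝ} (hσ : 0 < σ) (hK : 0 < K) (hs : 0 < s) (ht : 0 < t) :
    HasDerivAt (fun x => callPrice σ r q K x t)
      (Real.exp (-q * t) * stdNormalCDF (d1 σ r q s K t)) s := by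
  have hd1 := d1_hasDerivAt_s (r := r) (q := q) hσ hK hs ht
  have hd2 : HasDerivAt (fun x => d2 σ r q x K t) (1 / (s * σ * Real.sqrt t)) s :=
    hd1.sub_const _
  have hN1 := (stdNormalCDF_hasDerivAt (d1 σ r q s K t)).comp s hd1
  have hN2 := (stdNormalCDF_hasDerivAt (d2 σ r q s K t)).comp s hd2
  have h := (((hasDerivAt_id s).mul_const (Real.exp (-q * t))).mul hN1).sub
    (hN2.const_mul (K * Real.exp (-r * t)))
  refine h.congr_deriv ?_
  simp only [id, Function.comp]
  linear_combination (-(1 / (s * σ * Real.sqrt t))) *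
    pdf_identity (r := r) (q := q) hσ hK hs ht

lemma call_hasDerivAt_ss {σ r q K s t : ℝ} (hσ : 0 < σ) (hK : 0 < K) (hs : 0 < s) (ht : 0 < t) :
    HasDerivAt (fun x => Real.exp (-q * t) * stdNormalCDF (d1 σ r q x K t))
      (Real.exp (-q * t) * (stdNormalPDF (d1 σ r q s K t) * (1 / (s * σ * Real.sqrt t)))) s :=
  ((stdNormalCDF_hasDerivAt (d1 σ r q s K t)).comp s
    (d1_hasDerivAt_s (r := r) (q := q) hσ hK hs ht)).const_mul _

lemma call_hasDerivAt_t {σ r q K s t : ℝ} (hσ : 0 < σ) (hK : 0 < K) (hs : 0 < s) (ht : 0 < t) :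
    HasDerivAt (fun τ => callPrice σ r q K s τ)
      (-q * s * Real.exp (-q * t) * stdNormalCDF (d1 σ r q s K t)
        + r * K * Real.exp (-r * t) * stdNormalCDF (d2 σ r q s K t)
        + s * Real.exp (-q * t) * stdNormalPDF (d1 σ r q s K t) * (σ / (2 * Real.sqrt t))) t := by
  have hst : 0 < Real.sqrt t := Real.sqrt_pos.mpr ht
  have hsqrt : HasDerivAt (fun τ => σ * Real.sqrt τ) (σ * (1 / (2 * Real.sqrt t))) t :=
    (Real.hasDerivAt_sqrt ht.ne').const_mul σ
  obtain ⟨D, hd1⟩ : ∃ D, HasDerivAt (fun τ => d1 σ r q s K τ) D t :=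
    ⟨_, (((hasDerivAt_id t).const_mul (r - q + σ ^ 2 / 2)).const_add
      (Real.log (s / K))).div hsqrt (mul_pos hσ hst).ne'⟩
  have hd2 : HasDerivAt (fun τ => d2 σ r q s K τ) (D - σ * (1 / (2 * Real.sqrt t))) t :=
    hd1.sub hsqrt
  have hN1 := (stdNormalCDF_hasDerivAt (d1 σ r q s K t)).comp t hd1
  have hN2 := (stdNormalCDF_hasDerivAt (d2 σ r q s K t)).comp t hd2
  have he : ∀ a : ℝ, HasDerivAt (fun τ => Real.exp (-a * τ)) (Real.exp (-a * t) * (-a * 1)) t :=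
    fun a => ((hasDerivAt_id t).const_mul (-a)).exp
  have h := (((he q).const_mul s).mul hN1).sub (((he r).const_mul K).mul hN2)
  refine h.congr_deriv ?_
  simp only [Function.comp]
  linear_combination (-(D - σ * (1 / (2 * Real.sqrt t)))) *
    pdf_identity (r := r) (q := q) hσ hK hs ht

lemma call_pde {σ r q K s t : ℝ} (hσ : 0 < σ) (hs : 0 < s) (ht : 0 < t) :
    (-q * s * Real.exp (-q * t) * stdNormalCDF (d1 σ r q s K t)
        + r * K * Real.exp (-r * t) * stdNormalCDF (d2 σ r q s K t)
        + s * Real.exp (-q * t) * stdNormalPDF (d1 σ r q s K t) * (σ / (2 * Real.sqrt t)))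
      - (1 / 2) * σ ^ 2 * s ^ 2 * (Real.exp (-q * t) *
        (stdNormalPDF (d1 σ r q s K t) * (1 / (s * σ * Real.sqrt t))))
      - (r - q) * s * (Real.exp (-q * t) * stdNormalCDF (d1 σ r q s K t))
      + r * callPrice σ r q K s t = 0 := by
  have hst : 0 < Real.sqrt t := Real.sqrt_pos.mpr ht
  unfold callPrice
  field_simp
  ring

lemma inv_hasDerivAt (a : ℝ) {x : ℝ} (hx : 0 < x) :
    HasDerivAt (fun y : ℝ => a / y) (-a / x ^ 2) x := by
  refine ((hasDerivAt_inv hx.ne').const_mul a).congr_deriv ?_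
  field_simp

lemma pow_hasDerivAt {B x : ℝ} (l : ℝ) (hB : 0 < B) (hx : 0 < x) :
    HasDerivAt (fun y : ℝ => (B / y) ^ l) ((B / x) ^ l * (-l / x)) x := by
  have hp : 0 < B / x := div_pos hB hx
  refine ((inv_hasDerivAt B hx).rpow_const (p := l) (Or.inl hp.ne')).congr_deriv ?_
  rw [Real.rpow_sub_one hp.ne']
  field_simp

/-- First derivative of the reflected function. -/
lemma refl_hasDerivAt {B x : ℝ} (l : ℝ) (hB : 0 < B) (hx : 0 < x) {F F' : ℝ → ℝ}
    (hF : ∀ y, 0 < y → HasDerivAt F (F' y) y) :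
    HasDerivAt (fun y => (B / y) ^ l * F (B ^ 2 / y))
      ((B / x) ^ l * (-l / x * F (B ^ 2 / x) + (-B ^ 2 / x ^ 2) * F' (B ^ 2 / x))) x := by
  have h := (pow_hasDerivAt l hB hx).mul
    ((hF (B ^ 2 / x) (by positivity)).comp x (inv_hasDerivAt (B ^ 2) hx))
  refine h.congr_deriv ?_
  simp only [Function.comp]
  ring

/-- Second derivative of the reflected function. -/
lemma refl_hasDerivAt2 {B x : ℝ} (l : ℝ) (hB : 0 < B) (hx : 0 < x) {F F' F'' : ℝ → ℝ}
    (hF : ∀ y, 0 < y → HasDerivAt F (F' y) y) (hF' : ∀ y, 0 < y → HasDerivAt F' (F'' y) y) :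
    HasDerivAt (fun y => (B / y) ^ l * (-l / y * F (B ^ 2 / y) + (-B ^ 2 / y ^ 2) * F' (B ^ 2 / y)))
      ((B / x) ^ l * ((l ^ 2 + l) / x ^ 2 * F (B ^ 2 / x)
        + (2 * l + 2) * B ^ 2 / x ^ 3 * F' (B ^ 2 / x)
        + B ^ 4 / x ^ 4 * F'' (B ^ 2 / x))) x := by
  have hi := inv_hasDerivAt (B ^ 2) hx
  have h0 := (hF (B ^ 2 / x) (by positivity)).comp x hi
  have h1 := (hF' (B ^ 2 / x) (by positivity)).comp x hi
  have hsq : HasDerivAt (fun y : ℝ => -B ^ 2 / y ^ 2) (2 * B ^ 2 / x ^ 3) x := by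
    refine ((hasDerivAt_const x (-B ^ 2)).div (hasDerivAt_pow 2 x) (by positivity)).congr_deriv ?_
    field_simp
    ring
  have h := (pow_hasDerivAt l hB hx).mul
    (((inv_hasDerivAt (-l) hx).mul h0).add (hsq.mul h1))
  refine h.congr_deriv ?_
  simp only [Function.comp, Pi.add_apply, Pi.mul_apply]
  field_simp
  ring

theorem downOutCall_solves_pde_and_boundary
    (σ r q K B T : ℝ) (hσ : 0 < σ) (hB : 0 < B) (hBK : B ≤ K) (hT : 0 < T) :
    (∀ s t : ℝ, B < s → 0 < t → t ≤ T →
      deriv (fun τ => downOutCall σ r q K B s τ) t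
        - (1 / 2) * σ ^ 2 * s ^ 2 *
            deriv (fun x => deriv (fun y => downOutCall σ r q K B y t) x) s
        - (r - q) * s * deriv (fun x => downOutCall σ r q K B x t) s
        + r * downOutCall σ r q K B s t = 0) ∧
    (∀ t : ℝ, 0 < t → t ≤ T → downOutCall σ r q K B B t = 0) := by
  have hK : 0 < K := hB.trans_le hBK
  refine ⟨fun s t hs ht _ => ?_, fun t _ _ => ?_⟩
  · have hs0 : 0 < s := hB.trans hs
    have hz : 0 < B ^ 2 / s := by positivity
    have hF : ∀ y, 0 < y → HasDerivAt (fun x => callPrice σ r q K x t)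
        ((fun x => Real.exp (-q * t) * stdNormalCDF (d1 σ r q x K t)) y) y :=
      fun y hy => call_hasDerivAt_s hσ hK hy ht
    have hF' : ∀ y, 0 < y →
        HasDerivAt (fun x => Real.exp (-q * t) * stdNormalCDF (d1 σ r q x K t))
        ((fun x => Real.exp (-q * t) *
          (stdNormalPDF (d1 σ r q x K t) * (1 / (x * σ * Real.sqrt t)))) y) y :=
      fun y hy => call_hasDerivAt_ss hσ hK hy ht
    have hu1 : ∀ x, 0 < x → HasDerivAt (fun y => downOutCall σ r q K B y t) _ x :=
      fun x hx => (hF x hx).sub (refl_hasDerivAt (reflectionExponent σ r q) hB hx hF)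
    have hu2 := (hF' s hs0).sub (refl_hasDerivAt2 (reflectionExponent σ r q) hB hs0 hF hF')
    have hut : HasDerivAt (fun τ => downOutCall σ r q K B s τ) _ t :=
      (call_hasDerivAt_t (r := r) (q := q) hσ hK hs0 ht).sub
        ((call_hasDerivAt_t (r := r) (q := q) hσ hK hz ht).const_mul
          ((B / s) ^ reflectionExponent σ r q))
    have hd2 := hu2.congr_of_eventuallyEq
      (f₁ := fun x => deriv (fun y => downOutCall σ r q K B y t) x)
      (by filter_upwards [lt_mem_nhds hs0] with x hx using (hu1 x hx).deriv)
    rw [hd2.deriv, (hu1 s hs0).deriv, hut.deriv]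
    have p1 := call_pde (r := r) (q := q) (K := K) hσ hs0 ht
    have p2 := call_pde (r := r) (q := q) (K := K) hσ hz ht
    have hl : reflectionExponent σ r q * σ ^ 2 = 2 * (r - q) - σ ^ 2 := by
      unfold reflectionExponent
      field_simp
    unfold downOutCall
    simp only
    generalize reflectionExponent σ r q = l at *
    generalize Real.exp (-q * t) * (stdNormalPDF (d1 σ r q (B ^ 2 / s) K t) *
      (1 / (B ^ 2 / s * σ * Real.sqrt t))) = G at *
    generalize callPrice σ r q K (B ^ 2 / s) t = C at *
    generalize -q * (B ^ 2 / s) * Real.exp (-q * t) * stdNormalCDF (d1 σ r q (B ^ 2 / s) K t)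
        + r * K * Real.exp (-r * t) * stdNormalCDF (d2 σ r q (B ^ 2 / s) K t)
        + B ^ 2 / s * Real.exp (-q * t) * stdNormalPDF (d1 σ r q (B ^ 2 / s) K t) *
          (σ / (2 * Real.sqrt t)) = H at *
    generalize Real.exp (-q * t) * stdNormalCDF (d1 σ r q (B ^ 2 / s) K t) = D at *
    generalize (B / s) ^ l = P at *
    have e : r - q = (l * σ ^ 2 + σ ^ 2) / 2 := by linarith
    have key : H - 1 / 2 * σ ^ 2 * s ^ 2 * ((l ^ 2 + l) / s ^ 2 * C
        + (2 * l + 2) * B ^ 2 / s ^ 3 * D + B ^ 4 / s ^ 4 * G)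
        - (r - q) * s * (-l / s * C + (-B ^ 2 / s ^ 2) * D) + r * C = 0 := by
      rw [← p2, e]
      field_simp
      ring
    linear_combination p1 - P * key
  · unfold downOutCall
    have h : B ^ 2 / B = B := by field_simp
    rw [h, div_self hB.ne', Real.one_rpow]
    ring
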